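/- Let A be a commutative Noetherian local ring with residue field k, and suppose Ext^n_A(k, A) = 0 for all n > dim A and Ext^{dim A}_A(k, A) ≠ 0. Then injdim_A A = dim A and A is Gorenstein. -/

import Mathlib

open CategoryTheory

/-- The `n`-th Ext group of `M` and `N` over `R`. -/
noncomputable def extModule (R : Type) [CommRing R] (M N : ModuleCat R) (n : ℕ) :
    ModuleCat R :=
  ((Ext R (ModuleCat R) n).obj (Opposite.op M)).obj N

/-- Injective dimension: the least `n` such that `Ext^i(-, M)` vanishes for all
`i > n`. -/
noncomputable def injDim (R : Type) [CommRing R] (M : ModuleCat R) : ℕ∞ :=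
  sInf {n : ℕ∞ | ∀ (N : ModuleCat R) (i : ℕ), n < (i : ℕ∞) →
    Subsingleton (extModule R N M i)}

/- Let `k` be the residue field of `A` and `M` a finitely generated `A`-module such that
`Ext^n(k, M) = 0` for `n > d`. The ideals `I` with `Ext^n(A ⧸ I, M) = 0` for all `n > d` form an
Oka family, so by Noetherian induction it suffices to treat a prime `p` such that all larger ideals
are in the family. If `p` is not maximal, choose `x` in the maximal ideal outside `p`: the vanishing
of `Ext^(n+1)(A ⧸ (p + (x)), M)` makes `x` act surjectively on the finitely generated module
`Ext^n(A ⧸ p, M)`, which is therefore zero by Nakayama's lemma. Baer's criterion and dimension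
shifting turn `Ext^(d+1)(A ⧸ I, M) = 0` for all `I` into injective dimension at most `d`, and
`Ext^d(k, M) ≠ 0` gives the opposite inequality. -/

/- The functor `Ext R C n` is computed by projective resolutions, whereas long exact sequences
are available for `Abelian.Ext`. -/
theorem subsingleton_extFunctor_iff {R C : Type*} [Ring R] [Category* C] [Abelian C] [Linear R C]
    [EnoughProjectives C] [HasExt C] (X Y : C) {n : ℕ} (hn : n ≠ 0) :
    Subsingleton (((Ext R C n).obj (Opposite.op X)).obj Y) ↔
      Subsingleton (Abelian.Ext X Y n) := by
  obtain ⟨n, rfl⟩ := Nat.exists_eq_succ_of_ne_zero hn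
  let P := ProjectiveResolution.of X
  have exact_iff : Subsingleton (((Ext R C (n + 1)).obj (Opposite.op X)).obj Y) ↔
      ∀ f : P.complex.X (n + 1) ⟶ Y, P.complex.d (n + 2) (n + 1) ≫ f = 0 →
        ∃ g : P.complex.X n ⟶ Y, P.complex.d (n + 1) n ≫ g = f := by
    rw [← ModuleCat.isZero_iff_subsingleton, (P.isoExt (n + 1) Y).isZero_iff,
      ← HomologicalComplex.exactAt_iff_isZero_homology,
      HomologicalComplex.exactAt_iff' _ n (n + 1) (n + 2) (by simp) (by simp),
      ShortComplex.moduleCat_exact_iff]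
    rfl
  rw [exact_iff]
  constructor
  · intro h
    refine subsingleton_of_forall_eq 0 fun x ↦ ?_
    obtain ⟨f, hf, rfl⟩ := P.extMk_surjective x (n + 2) rfl
    exact (P.extMk_eq_zero_iff f (n + 2) rfl hf n rfl).2 (h f hf)
  · intro _ f hf
    exact (P.extMk_eq_zero_iff f (n + 2) rfl hf n rfl).1 (Subsingleton.elim _ _)

theorem injDim_le_of_hasInjectiveDimensionLE {R : Type} [CommRing R] (M : ModuleCat R) (d : ℕ)
    [HasInjectiveDimensionLE M d] : injDim R M ≤ d := by
  refine sInf_le fun N i hi ↦ ?_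
  have hdi : d < i := by exact_mod_cast hi
  exact (subsingleton_extFunctor_iff N M (Nat.ne_zero_of_lt hdi)).2
    (HasInjectiveDimensionLT.subsingleton M (d + 1) i hdi N)

theorem le_injDim_of_nontrivial_extModule {R : Type} [CommRing R] (N M : ModuleCat R) (n : ℕ)
    [Nontrivial (extModule R N M n)] : n ≤ injDim R M := by
  refine le_sInf fun m hm ↦ ?_
  by_contra! hlt
  exact not_subsingleton _ (hm N n hlt)

section Ext

variable {C : Type*} [Category* C] [Abelian C] [HasExt C]

theorem subsingleton_ext_of_iso {X X' : C} (e : X ≅ X') (Y : C) (n : ℕ)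
    [Subsingleton (Abelian.Ext X' Y n)] : Subsingleton (Abelian.Ext X Y n) := by
  refine subsingleton_of_forall_eq 0 fun x ↦ ?_
  have hx : (Abelian.Ext.mk₀ e.inv).comp x (zero_add n) = 0 := Subsingleton.elim _ _
  rw [← x.mk₀_id_comp, ← e.hom_inv_id, ← Abelian.Ext.mk₀_comp_mk₀_assoc, hx,
    Abelian.Ext.comp_zero]

theorem subsingleton_ext_of_shortExact {S : ShortComplex C} (hS : S.ShortExact) (Y : C) (n : ℕ)
    (h₁ : Subsingleton (Abelian.Ext S.X₁ Y n)) (h₃ : Subsingleton (Abelian.Ext S.X₃ Y n)) :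
    Subsingleton (Abelian.Ext S.X₂ Y n) := by
  refine subsingleton_of_forall_eq 0 fun x ↦ ?_
  obtain ⟨y, rfl⟩ := Abelian.Ext.contravariant_sequence_exact₂ hS Y x (h₁.elim _ _)
  rw [h₃.elim y 0, Abelian.Ext.comp_zero]

theorem subsingleton_ext_X₃_of_injective {S : ShortComplex C} (hS : S.ShortExact)
    [Injective S.X₂] (X : C) (n : ℕ) [Subsingleton (Abelian.Ext X S.X₁ (n + 2))] :
    Subsingleton (Abelian.Ext X S.X₃ (n + 1)) := by
  refine subsingleton_of_forall_eq 0 fun x ↦ ?_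
  obtain ⟨y, rfl⟩ := Abelian.Ext.covariant_sequence_exact₃ X hS x rfl (Subsingleton.elim _ _)
  rw [y.eq_zero_of_injective, Abelian.Ext.zero_comp]

end Ext

universe u

section Baer

variable {R : Type u} [Ring R] (M : ModuleCat.{u} R)

theorem injective_of_forall_subsingleton_ext_quotient
    (h : ∀ I : Ideal R, Subsingleton (Abelian.Ext (ModuleCat.of R (R ⧸ I)) M 1)) :
    Injective M := by
  rw [← Module.injective_iff_injective_object, ← Module.Baer.iff_injective]
  intro I g
  have hS := ModuleCat.shortComplex_shortExact
    (ModuleCat.shortComplexOfCompEqZero I.subtype I.mkQ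
      (LinearMap.exact_subtype_mkQ I).linearMap_comp_eq_zero)
    (LinearMap.exact_subtype_mkQ I) I.subtype_injective I.mkQ_surjective
  obtain ⟨x, hx⟩ := Abelian.Ext.contravariant_sequence_exact₁ hS M
    (Abelian.Ext.mk₀ (ModuleCat.ofHom g)) (add_zero 1) ((h I).elim _ _)
  obtain ⟨φ, rfl⟩ := Abelian.Ext.homEquiv₀.symm.surjective x
  have hφ := Abelian.Ext.homEquiv₀.symm.injective (a₁ := _ ≫ φ) (a₂ := ModuleCat.ofHom g)
    (by simpa using hx)
  exact ⟨φ.hom, fun r hr ↦ ConcreteCategory.congr_hom hφ (⟨r, hr⟩ : I)⟩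

theorem hasInjectiveDimensionLE_of_forall_subsingleton_ext_quotient (n : ℕ)
    (h : ∀ I : Ideal R, Subsingleton (Abelian.Ext (ModuleCat.of R (R ⧸ I)) M (n + 1))) :
    HasInjectiveDimensionLE M n := by
  induction n generalizing M with
  | zero =>
    exact injective_iff_hasInjectiveDimensionLT_one.1
      (injective_of_forall_subsingleton_ext_quotient M h)
  | succ n ih =>
    obtain ⟨⟨J, _, f, _⟩⟩ := EnoughInjectives.presentation M
    have hS : (ShortComplex.mk f (Limits.cokernel.π f) (Limits.cokernel.condition f)).ShortExact :=
      { exact := ShortComplex.exact_cokernel f }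
    refine (hS.hasInjectiveDimensionLT_X₃_iff n inferInstance).1 (ih _ fun I ↦ ?_)
    have := h I
    exact subsingleton_ext_X₃_of_injective hS _ n

end Baer

theorem forall_of_isOka_of_forall_prime {R : Type*} [CommSemiring R] [IsNoetherianRing R]
    {P : Ideal R → Prop} (hP : Ideal.IsOka P)
    (hprime : ∀ p : Ideal R, p.IsPrime → (∀ J > p, P J) → P p) (I : Ideal R) : P I := by
  by_contra hI
  obtain ⟨p, hp⟩ := exists_maximal_of_wellFoundedGT (¬P ·) ⟨I, hI⟩
  exact hp.prop (hprime p (hP.isPrime_of_maximal_not hp) fun J hJ ↦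
    not_not.1 (hp.not_prop_of_gt hJ))

section CommRing

variable {R : Type u} [CommRing R]

/-- The short complex `R ⧸ (I : a) ⟶ R ⧸ I ⟶ R ⧸ (I + (a))` whose first map is multiplication
by `a`; it relates the three ideals occurring in the definition of an Oka family. -/
def quotientColonShortComplex (I : Ideal R) (a : R) : ShortComplex (ModuleCat.{u} R) :=
  ModuleCat.shortComplexOfCompEqZero
    (Submodule.mapQ (I.colon (Ideal.span {a})) I (LinearMap.lsmul R R a) fun r hr ↦ by
      simpa [mul_comm] using Ideal.mem_colon_span_singleton.1 hr)
    (Submodule.factor (le_sup_left : I ≤ I ⊔ Ideal.span {a})) <| by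
      refine Submodule.linearMap_qext _ (LinearMap.ext fun r ↦ ?_)
      exact (Submodule.Quotient.mk_eq_zero _).2
        (Ideal.mem_sup_right (Ideal.mem_span_singleton.2 (dvd_mul_right a r)))

theorem quotientColonShortComplex_shortExact (I : Ideal R) (a : R) :
    (quotientColonShortComplex I a).ShortExact := by
  refine ModuleCat.shortComplex_shortExact _ ?_ ?_ (Submodule.factor_surjective le_sup_left)
  · refine fun y ↦ ⟨fun hy ↦ ?_, ?_⟩
    · obtain ⟨y, rfl⟩ := Submodule.Quotient.mk_surjective _ y
      obtain ⟨i, hi, z, hz, rfl⟩ := Submodule.mem_sup.1 ((Submodule.Quotient.mk_eq_zero _).1 hy)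
      obtain ⟨c, rfl⟩ := Ideal.mem_span_singleton.1 hz
      refine ⟨Submodule.Quotient.mk c, (Submodule.Quotient.eq I).2 ?_⟩
      simpa using hi
    · rintro ⟨x, rfl⟩
      exact ConcreteCategory.congr_hom (quotientColonShortComplex I a).zero x
  · refine (injective_iff_map_eq_zero _).2 fun y hy ↦ ?_
    obtain ⟨y, rfl⟩ := Submodule.Quotient.mk_surjective _ y
    have hay : a * y ∈ I := (Submodule.Quotient.mk_eq_zero I).1 hy
    exact (Submodule.Quotient.mk_eq_zero _).2
      (Ideal.mem_colon_span_singleton.2 (mul_comm a y ▸ hay))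

theorem isOka_subsingleton_ext_quotient (M : ModuleCat.{u} R) (n : ℕ) :
    Ideal.IsOka fun I : Ideal R ↦ Subsingleton (Abelian.Ext (ModuleCat.of R (R ⧸ I)) M n) where
  top := by
    have hzero : Limits.IsZero (ModuleCat.of R (R ⧸ (⊤ : Ideal R))) :=
      ModuleCat.isZero_of_subsingleton _
    refine subsingleton_of_forall_eq 0 fun x ↦ ?_
    rw [← x.mk₀_id_comp, hzero.eq_zero_of_src (𝟙 _), Abelian.Ext.mk₀_zero, Abelian.Ext.zero_comp]
  oka {I a} hsup hcolon :=
    subsingleton_ext_of_shortExact (quotientColonShortComplex_shortExact I a) M n hcolon hsup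

theorem subsingleton_ext_of_isSMulRegular [IsNoetherianRing R] (N M : ModuleCat.{u} R)
    [Module.Finite R N] [Module.Finite R M] {x : R} (hx : x ∈ Ring.jacobson R)
    (hreg : IsSMulRegular N x) (n : ℕ)
    [Subsingleton (Abelian.Ext (ModuleCat.of R (QuotSMulTop x N)) M (n + 1))] :
    Subsingleton (Abelian.Ext N M n) := by
  have hdiv : (⊤ : Submodule R (Abelian.Ext N M n)) ≤ Ring.jacobson R • ⊤ := by
    intro y _
    obtain ⟨z, hz⟩ := Abelian.Ext.contravariant_sequence_exact₁
      hreg.smulShortComplex_shortExact M y (add_comm 1 n)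
      (Subsingleton.elim (α := Abelian.Ext (ModuleCat.of R (QuotSMulTop x N)) M (n + 1)) _ _)
    have hxz : y = x • (z : Abelian.Ext N M n) := by
      rw [← Abelian.Ext.mk₀_id_comp (z : Abelian.Ext N M n), ← Abelian.Ext.smul_comp,
        ← Abelian.Ext.mk₀_smul]
      exact hz.symm
    exact hxz ▸ Submodule.smul_mem_smul hx trivial
  exact (Submodule.subsingleton_iff R).1
    (subsingleton_of_bot_eq_top (Module.Finite.fg_top.eq_bot_of_le_jacobson_smul hdiv).symm)

/-- The isomorphism `(R ⧸ I) ⧸ a(R ⧸ I) ≃ R ⧸ (I + (a))`, identifying the cokernel of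
multiplication by `a` on `R ⧸ I` with a cyclic module on a larger ideal. -/
noncomputable def quotSMulTopQuotientEquiv (I : Ideal R) (a : R) :
    QuotSMulTop a (R ⧸ I) ≃ₗ[R] R ⧸ I ⊔ Ideal.span {a} :=
  Submodule.quotEquivOfEq _ _ (by
    rw [← Submodule.ideal_span_singleton_smul, ← I.range_mkQ, ← Submodule.map_top,
      ← Submodule.map_smul'', smul_eq_mul, Ideal.mul_top]) ≪≫ₗ
    Submodule.quotientQuotientEquivQuotientSup I (Ideal.span {a})

end CommRing

section IsLocalRing

open IsLocalRing

variable {A : Type u} [CommRing A] [IsNoetherianRing A] [IsLocalRing A] (M : ModuleCat.{u} A)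
  [Module.Finite A M] {d : ℕ}

theorem subsingleton_ext_quotient_of_residueField
    (h : ∀ n, d < n → Subsingleton (Abelian.Ext (ModuleCat.of A (ResidueField A)) M n))
    (I : Ideal A) :
    ∀ n, d < n → Subsingleton (Abelian.Ext (ModuleCat.of A (A ⧸ I)) M n) := by
  have hOka : Ideal.IsOka fun I : Ideal A ↦
      ∀ n, d < n → Subsingleton (Abelian.Ext (ModuleCat.of A (A ⧸ I)) M n) :=
    { top n _ := (isOka_subsingleton_ext_quotient M n).top
      oka h₁ h₂ n hn := (isOka_subsingleton_ext_quotient M n).oka (h₁ n hn) (h₂ n hn) }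
  refine forall_of_isOka_of_forall_prime hOka (fun p hp ih n hn ↦ ?_) I
  obtain rfl | hpm := eq_or_ne p (maximalIdeal A)
  · exact h n hn
  obtain ⟨x, hx, hxp⟩ := SetLike.exists_of_lt (lt_of_le_of_ne (le_maximalIdeal hp.ne_top) hpm)
  have := ih (p ⊔ Ideal.span {x}) (Submodule.lt_sup_iff_notMem.2 hxp) (n + 1) (by lia)
  have := subsingleton_ext_of_iso (quotSMulTopQuotientEquiv p x).toModuleIso M (n + 1)
  have hreg : IsSMulRegular (A ⧸ p) x :=
    (isSMulRegular_quotient_iff_mem_of_smul_mem p x).2 fun _ hy ↦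
      (hp.mem_or_mem hy).resolve_left hxp
  exact subsingleton_ext_of_isSMulRegular (ModuleCat.of A (A ⧸ p)) M
    (ringJacobson_eq_maximalIdeal A ▸ hx) hreg n

theorem hasInjectiveDimensionLE_of_subsingleton_ext_residueField
    (h : ∀ n, d < n → Subsingleton (Abelian.Ext (ModuleCat.of A (ResidueField A)) M n)) :
    HasInjectiveDimensionLE M d :=
  hasInjectiveDimensionLE_of_forall_subsingleton_ext_quotient M d fun I ↦
    subsingleton_ext_quotient_of_residueField M h I (d + 1) d.lt_succ_self

end IsLocalRing

theorem stmt19_general (A : Type) [CommRing A] [IsNoetherianRing A] [IsLocalRing A]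
    (M : ModuleCat A) [Module.Finite A M] (d : ℕ)
    (hvanish : ∀ n : ℕ, d < n → Subsingleton (extModule A
      (ModuleCat.of A (IsLocalRing.ResidueField A)) M n))
    (hnonzero : Nontrivial (extModule A
      (ModuleCat.of A (IsLocalRing.ResidueField A)) M d)) :
    injDim A M = (d : ℕ∞) := by
  have : HasInjectiveDimensionLE M d :=
    hasInjectiveDimensionLE_of_subsingleton_ext_residueField M fun n hn ↦
      (subsingleton_extFunctor_iff _ M (Nat.ne_zero_of_lt hn)).1 (hvanish n hn)
  exact le_antisymm (injDim_le_of_hasInjectiveDimensionLE M d)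
    (le_injDim_of_nontrivial_extModule (ModuleCat.of A (IsLocalRing.ResidueField A)) M d)

/-- If `A` is a commutative Noetherian local ring of Krull dimension `d` with
residue field `k`, `Ext^n_A(k, A) = 0` for all `n > d`, and
`Ext^d_A(k, A) ≠ 0`, then `injdim_A A = d`; in particular `A` is Gorenstein. -/
theorem stmt19 (A : Type) [CommRing A] [IsNoetherianRing A] [IsLocalRing A]
    (d : ℕ) (hd : ringKrullDim A = (d : WithBot ℕ∞))
    (hvanish : ∀ n : ℕ, d < n → Subsingleton (extModule A
      (ModuleCat.of A (IsLocalRing.ResidueField A)) (ModuleCat.of A A) n))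
    (hnonzero : Nontrivial (extModule A
      (ModuleCat.of A (IsLocalRing.ResidueField A)) (ModuleCat.of A A) d)) :
    injDim A (ModuleCat.of A A) = (d : ℕ∞) :=
  stmt19_general A (ModuleCat.of A A) d hvanish hnonzero
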